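/- arXiv:1909.11027 — 3 statements merged into one kernel-verified Lean document; each statement's English description precedes it below -/
import Mathlib

section
/- Let n ≥ 2 be an integer and let S be a set of 4-permutations whose cover matrix C is constant (all sixteen entries of C are equal). Then the gradient ∇h_{S,n}(0,…,0) = (∂h_{S,n}/∂x_{ij}(0,…,0))_{i,j∈[n−1]} is the zero vector. -/
open MeasureTheory Filter

noncomputable section

/-- A permuton: a Borel probability measure on `ℝ × ℝ` (supported on `[0,1]²`)
with uniform marginals. -/
def IsPermuton (μ : Measure (ℝ × ℝ)) : Prop :=
  IsProbabilityMeasure μ ∧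
    (∀ x x' : ℝ, 0 ≤ x → x ≤ x' → x' ≤ 1 →
      μ (Set.Icc x x' ×ˢ Set.Icc (0 : ℝ) 1) = ENNReal.ofReal (x' - x)) ∧
    (∀ y y' : ℝ, 0 ≤ y → y ≤ y' → y' ≤ 1 →
      μ (Set.Icc (0 : ℝ) 1 ×ˢ Set.Icc y y') = ENNReal.ofReal (y' - y))

/-- The uniform permuton: two-dimensional Lebesgue measure on `[0,1]²`. -/
def uniformPermuton : Measure (ℝ × ℝ) :=
  volume.restrict (Set.Icc (0 : ℝ) 1 ×ˢ Set.Icc (0 : ℝ) 1)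

/-- The support of a Borel measure: all points each of whose open neighbourhoods has
positive measure. -/
def measSupport (μ : Measure (ℝ × ℝ)) : Set (ℝ × ℝ) :=
  {p | ∀ U : Set (ℝ × ℝ), IsOpen U → p ∈ U → 0 < μ U}

/-- The pattern density of a `k`-permutation `π` in a measure `μ` on `ℝ × ℝ`:
the `μ^{⊗ k}`-probability that `k` sampled points, relabelled so that their
`x`-coordinates increase, have `y`-coordinates ordered according to `π`. -/
def PermutonDensity {k : ℕ} (π : Equiv.Perm (Fin k)) (μ : Measure (ℝ × ℝ)) : ℝ :=
  ((Measure.pi fun _ : Fin k => μ)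
    {p : Fin k → ℝ × ℝ | ∃ σ : Equiv.Perm (Fin k),
      StrictMono (fun i => (p (σ i)).1) ∧
        ∀ i j : Fin k, (p (σ i)).2 < (p (σ j)).2 ↔ π i < π j}).toReal

open scoped Classical in
/-- The pattern density of a `k`-permutation `π` in an `n`-permutation `Π`:
the proportion of `k`-element subsets of `Fin n` on which `Π` induces the pattern `π`
(zero when `n < k`). -/
def PatternDensity {k n : ℕ} (π : Equiv.Perm (Fin k)) (Perm : Equiv.Perm (Fin n)) : ℝ :=
  ((Finset.univ.filter fun A : Finset (Fin n) =>
      ∃ h : A.card = k, ∀ i j : Fin k,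
        Perm ↑(A.orderIsoOfFin h i) < Perm ↑(A.orderIsoOfFin h j) ↔ π i < π j).card : ℝ) /
    (n.choose k)

/-- A sequence of permutations (of varying orders) is quasirandom if the density of every
pattern `π` converges to `1/|π|!`. -/
def Quasirandom (P : ℕ → (n : ℕ) × Equiv.Perm (Fin n)) : Prop :=
  ∀ (k : ℕ) (π : Equiv.Perm (Fin k)),
    Tendsto (fun i => PatternDensity π (P i).2) atTop (nhds (1 / (Nat.factorial k : ℝ)))

/-- A set `S` of `k`-permutations is `Σ`-forcing if a sequence of permutations is quasirandom
exactly when the sum of the densities of the patterns from `S` converges to `|S|/k!`. -/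
def SigmaForcing {k : ℕ} (S : Finset (Equiv.Perm (Fin k))) : Prop :=
  ∀ P : ℕ → (n : ℕ) × Equiv.Perm (Fin n),
    Quasirandom P ↔
      Tendsto (fun i => ∑ π ∈ S, PatternDensity π (P i).2) atTop
        (nhds ((S.card : ℝ) / (Nat.factorial k : ℝ)))

/-- The `4`-permutation written in one-line notation as `(a+1)(b+1)(c+1)(d+1)`
(inputs are 0-indexed). -/
def mk4 (a b c d : Fin 4) (h : Function.Bijective ![a, b, c, d] := by decide) :
    Equiv.Perm (Fin 4) :=
  Equiv.ofBijective _ h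

/-- A doubly stochastic matrix: non-negative entries, all row and column sums equal to one. -/
def IsDoublyStochastic {n : ℕ} (A : Matrix (Fin n) (Fin n) ℝ) : Prop :=
  (∀ i j, 0 ≤ A i j) ∧ (∀ i, ∑ j, A i j = 1) ∧ (∀ j, ∑ i, A i j = 1)

/-- The step permuton `μ[A]` associated with an `n × n` doubly stochastic matrix `A`. -/
def stepPermuton {n : ℕ} (A : Matrix (Fin n) (Fin n) ℝ) : Measure (ℝ × ℝ) :=
  ∑ i : Fin n, ∑ j : Fin n,
    ENNReal.ofReal (A i j * n) •
      volume.restrict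
        (Set.Ico ((i : ℝ) / n) (((i : ℝ) + 1) / n) ×ˢ
          Set.Ico ((j : ℝ) / n) (((j : ℝ) + 1) / n))

/-- The matrix `B^{ij}` (0-indexed: `p, q ∈ [n-1]`): `+1` at positions `(p,q)` and
`(p+1,q+1)`, `-1` at positions `(p,q+1)` and `(p+1,q)`, `0` elsewhere. -/
def Bmat (n : ℕ) (p q : Fin (n - 1)) : Matrix (Fin n) (Fin n) ℝ := fun a b =>
  (if (a : ℕ) = (p : ℕ) ∧ (b : ℕ) = (q : ℕ) then 1 else 0) +
    (if (a : ℕ) = (p : ℕ) + 1 ∧ (b : ℕ) = (q : ℕ) + 1 then 1 else 0) -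
    (if (a : ℕ) = (p : ℕ) ∧ (b : ℕ) = (q : ℕ) + 1 then 1 else 0) -
    (if (a : ℕ) = (p : ℕ) + 1 ∧ (b : ℕ) = (q : ℕ) then 1 else 0)

/-- The matrix `A + ∑_{i,j} x_{ij} B^{ij}` where `A` is the `n × n` matrix with all
entries `1/n`. -/
def pertMatrix (n : ℕ) (x : Fin (n - 1) × Fin (n - 1) → ℝ) : Matrix (Fin n) (Fin n) ℝ :=
  fun a b => 1 / n + ∑ p : Fin (n - 1) × Fin (n - 1), x p * Bmat n p.1 p.2 a b

/-- The function `h_{S,n}`: the sum over `π ∈ S` of the pattern density of `π` in the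
step permuton of the perturbed matrix. -/
def hSN (n : ℕ) (S : Finset (Equiv.Perm (Fin 4))) (x : Fin (n - 1) × Fin (n - 1) → ℝ) : ℝ :=
  ∑ π ∈ S, PermutonDensity π (stepPermuton (pertMatrix n x))

open scoped Classical in
/-- The cover matrix of a set `S` of `4`-permutations: `C i j` is the number of `π ∈ S`
with `π j = i`. -/
def coverMatrix (S : Finset (Equiv.Perm (Fin 4))) : Fin 4 → Fin 4 → ℕ := fun i j =>
  (S.filter fun π => π j = i).card

/-- The eight symmetry operations on `4`-permutations. -/
def symOps : List (Equiv.Perm (Fin 4) → Equiv.Perm (Fin 4)) :=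
  [fun σ => σ,
   fun σ => σ * Fin.revPerm,
   fun σ => Fin.revPerm * σ,
   fun σ => Fin.revPerm * σ * Fin.revPerm,
   fun σ => σ⁻¹,
   fun σ => σ⁻¹ * Fin.revPerm,
   fun σ => Fin.revPerm * σ⁻¹,
   fun σ => Fin.revPerm * σ⁻¹ * Fin.revPerm]

open scoped Classical in
/-- `T` is symmetric to `S` if one of the eight symmetry operations maps `S` onto `T`. -/
def SymmetricSets (S T : Finset (Equiv.Perm (Fin 4))) : Prop :=
  ∃ op ∈ symOps, T = S.image op

end

/-! ### Combinatorial part -/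

/-- The event that four points form the pattern `π`. -/
def patEvent (π : Equiv.Perm (Fin 4)) : Set (Fin 4 → ℝ × ℝ) :=
  {p : Fin 4 → ℝ × ℝ | ∃ σ : Equiv.Perm (Fin 4),
      StrictMono (fun i => (p (σ i)).1) ∧
        ∀ i j : Fin 4, (p (σ i)).2 < (p (σ j)).2 ↔ π i < π j}

/-- Permute the `y`-coordinates. -/
def twist (τ : Equiv.Perm (Fin 4)) (p : Fin 4 → ℝ × ℝ) : Fin 4 → ℝ × ℝ :=
  fun i => ((p i).1, (p (τ i)).2)

lemma perm_eq_of_lt_iff (π θ : Equiv.Perm (Fin 4)) (h : ∀ i j, θ i < θ j ↔ π i < π j) :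
    π = θ := by
  have h1 : StrictMono (fun i => π (θ.symm i)) := by
    intro i j hij
    have := h (θ.symm i) (θ.symm j)
    simp only [Equiv.apply_symm_apply] at this
    exact this.1 hij
  have h2 : (fun i => π (θ.symm i)) = (id : Fin 4 → Fin 4) := by
    apply (StrictMono.range_inj h1 strictMono_id).1
    rw [Set.range_id]
    exact (θ.symm.trans π).surjective.range_eq
  ext i
  have := congrFun h2 (θ i)
  simp at this
  rw [this]

lemma exists_sort (x : Fin 4 → ℝ) (hx : Function.Injective x) :
    ∃ σ : Equiv.Perm (Fin 4), StrictMono (fun i => x (σ i)) :=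
  ⟨Tuple.sort x, (Tuple.monotone_sort x).strictMono_of_injective
    (hx.comp (Tuple.sort x).injective)⟩

lemma mem_patEvent_twist {p : Fin 4 → ℝ × ℝ}
    {σ ρ : Equiv.Perm (Fin 4)} (hσ : StrictMono (fun i => (p (σ i)).1))
    (hρ : StrictMono (fun i => (p (ρ i)).2)) (hx : Function.Injective (fun i => (p i).1))
    (π τ : Equiv.Perm (Fin 4)) :
    twist τ p ∈ patEvent π ↔ τ = ρ * π * σ⁻¹ := by
  have key : ∀ i j, (p (τ (σ i))).2 < (p (τ (σ j))).2 ↔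
      (ρ⁻¹ * τ * σ) i < (ρ⁻¹ * τ * σ) j := by
    intro i j
    rw [← hρ.lt_iff_lt]
    simp
  constructor
  · rintro ⟨σ', h1, h2⟩
    change StrictMono (fun i => (p (σ' i)).1) at h1
    have : σ' = σ := by
      have h3 : (fun i => (p (σ' i)).1) = fun i => (p (σ i)).1 := by
        apply (StrictMono.range_inj h1 hσ).1
        rw [show (fun i => (p (σ' i)).1) = (fun i => (p i).1) ∘ σ' from rfl,
          show (fun i => (p (σ i)).1) = (fun i => (p i).1) ∘ σ from rfl,
          σ'.surjective.range_comp, σ.surjective.range_comp]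
      ext i
      rw [hx (congrFun h3 i)]
    subst this
    have := perm_eq_of_lt_iff π (ρ⁻¹ * τ * σ') (fun i j => by
      rw [← key]; exact h2 i j)
    rw [this]; group
  · intro h
    refine ⟨σ, hσ, fun i j => ?_⟩
    have h3 : ρ⁻¹ * τ * σ = π := by rw [h]; group
    rw [← h3, ← key]
    rfl

open scoped Classical in
lemma comb_count (S : Finset (Equiv.Perm (Fin 4))) (c : ℕ)
    (hC : ∀ i j : Fin 4, coverMatrix S i j = c) (k : Fin 4) (p : Fin 4 → ℝ × ℝ)
    (hx : Function.Injective (fun i => (p i).1)) (hy : Function.Injective (fun i => (p i).2)) :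
    ∑ τ ∈ Finset.univ.filter (fun τ : Equiv.Perm (Fin 4) => τ k = k),
      ∑ π ∈ S, (patEvent π).indicator (fun _ => (1 : ℝ)) (twist τ p) = c := by
  obtain ⟨σ, hσ⟩ := exists_sort _ hx
  obtain ⟨ρ, hρ⟩ := exists_sort _ hy
  rw [Finset.sum_comm]
  simp only [Set.indicator_apply, mem_patEvent_twist hσ hρ hx]
  simp only [Finset.sum_ite_eq', Finset.mem_filter, Finset.mem_univ, true_and]
  rw [← hC (ρ⁻¹ k) (σ⁻¹ k), coverMatrix, Finset.card_filter]
  push_cast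
  refine Finset.sum_congr rfl fun π _ => ?_
  congr 1
  simp only [eq_iff_iff]
  rw [Equiv.Perm.eq_inv_iff_eq]
  rfl

/-! ### Measure-theoretic part -/

lemma measurableSet_patEvent (π : Equiv.Perm (Fin 4)) : MeasurableSet (patEvent π) := by
  have : patEvent π = ⋃ σ : Equiv.Perm (Fin 4),
      ((⋂ i : Fin 4, ⋂ j : Fin 4, {p : Fin 4 → ℝ × ℝ | i < j → (p (σ i)).1 < (p (σ j)).1}) ∩
        ⋂ i : Fin 4, ⋂ j : Fin 4,
          {p : Fin 4 → ℝ × ℝ | (p (σ i)).2 < (p (σ j)).2 ↔ π i < π j}) := by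
    ext p
    simp [patEvent, StrictMono]
  rw [this]
  refine MeasurableSet.iUnion fun σ => MeasurableSet.inter ?_ ?_
  · refine MeasurableSet.iInter fun i => MeasurableSet.iInter fun j => ?_
    exact (MeasurableSet.const _).imp
      (measurableSet_lt (by fun_prop) (by fun_prop))
  · refine MeasurableSet.iInter fun i => MeasurableSet.iInter fun j => ?_
    exact (measurableSet_lt (by fun_prop) (by fun_prop)).iff (MeasurableSet.const _)

/-- The `a`-th cell. -/
def cell (n a : ℕ) : Set ℝ := Set.Ico ((a : ℝ) / n) (((a : ℝ) + 1) / n)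

/-- Lebesgue measure on the union of the cells. -/
noncomputable def Um (n : ℕ) : Measure ℝ := Measure.sum fun a : Fin n => volume.restrict (cell n a)

instance (n : ℕ) : IsFiniteMeasure (Um n) := by
  unfold Um
  rw [Measure.sum_fintype]
  have (a : Fin n) : IsFiniteMeasure (volume.restrict (cell n a)) := by
    unfold cell; infer_instance
  infer_instance

lemma Um_prod (n : ℕ) : (Um n).prod (Um n) = ∑ a : Fin n, ∑ b : Fin n,
    volume.restrict (cell n a ×ˢ cell n b) := by
  have (a : Fin n) : SFinite (volume.restrict (cell n a)) := by infer_instance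
  unfold Um
  rw [Measure.prod_sum, Measure.sum_fintype, Fintype.sum_prod_type]
  simp only [Measure.prod_restrict]
  rfl

lemma floor_cell {n a : ℕ} (hn : 0 < n) {x : ℝ} (hx : x ∈ cell n a) : ⌊n * x⌋₊ = a := by
  have hn' : (0 : ℝ) < n := by exact_mod_cast hn
  obtain ⟨h1, h2⟩ := hx
  rw [div_le_iff₀ hn'] at h1
  rw [lt_div_iff₀ hn'] at h2
  have h0 : (0 : ℝ) ≤ a := Nat.cast_nonneg a
  rw [Nat.floor_eq_iff (by linarith)]
  constructor <;> linarith

lemma Um_eq (n : ℕ) : Um n = volume.restrict (⋃ a : Fin n, cell n a) := by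
  have hd : Pairwise (Function.onFun Disjoint fun a : Fin n => cell n a) := by
    intro a b hab
    refine Set.disjoint_left.2 fun x ha hb => hab (Fin.ext ?_)
    have hn : 0 < n := a.pos
    rw [← floor_cell hn ha, ← floor_cell hn hb]
  exact (Measure.restrict_iUnion hd fun a => measurableSet_Ico).symm

/-- One-dimensional sign vector. -/
noncomputable def vv (p a : ℕ) : ℝ := (if a = p then 1 else 0) - (if a = p + 1 then 1 else 0)

/-- The step function of the direction matrix. -/
noncomputable def gg (n p q : ℕ) (z : ℝ × ℝ) : ℝ := n * (vv p ⌊n * z.1⌋₊ * vv q ⌊n * z.2⌋₊)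

lemma Bmat_eq (n : ℕ) (p q : Fin (n - 1)) (a b : Fin n) : Bmat n p q a b = vv p a * vv q b := by
  unfold Bmat vv
  split_ifs <;> first | (exfalso; omega) | norm_num

lemma vv_abs (p a : ℕ) : |vv p a| ≤ 1 := by
  unfold vv
  split_ifs <;> norm_num

lemma gg_abs (n p q : ℕ) (z : ℝ × ℝ) : |gg n p q z| ≤ n := by
  unfold gg
  rw [abs_mul, abs_mul, Nat.abs_cast]
  have h := mul_le_mul (vv_abs p ⌊n * z.1⌋₊) (vv_abs q ⌊n * z.2⌋₊) (abs_nonneg _) zero_le_one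
  calc (n : ℝ) * _ ≤ n * (1 * 1) := mul_le_mul_of_nonneg_left h (Nat.cast_nonneg n)
    _ = n := by ring

lemma measurable_vvfloor (n p : ℕ) : Measurable (fun x : ℝ => vv p ⌊n * x⌋₊) :=
  (measurable_from_nat (f := vv p)).comp (Nat.measurable_floor.comp (measurable_const_mul _))

lemma measurable_gg (n p q : ℕ) : Measurable (gg n p q) := by
  unfold gg
  exact (((measurable_vvfloor n p).comp measurable_fst).mul
    ((measurable_vvfloor n q).comp measurable_snd)).const_mul _

lemma measurableSet_cell (n a : ℕ) : MeasurableSet (cell n a) := measurableSet_Ico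

lemma integral_vv {n p : ℕ} (hp : p + 1 < n) : ∫ x, vv p ⌊n * x⌋₊ ∂(Um n) = 0 := by
  have hn : 0 < n := by omega
  unfold Um
  rw [Measure.sum_fintype, integral_finsetSum_measure]
  · have : ∀ a : Fin n, ∫ x, vv p ⌊n * x⌋₊ ∂(volume.restrict (cell n a)) = vv p a * (1 / n) := by
      intro a
      rw [setIntegral_congr_fun (g := fun _ => vv p a) (measurableSet_cell n a)
        (fun x hx => by simp only [floor_cell hn hx])]
      have hl : ((a : ℝ)) / n ≤ ((a : ℝ) + 1) / n := by gcongr; linarith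
      simp only [setIntegral_const, cell, Real.volume_real_Ico_of_le hl, smul_eq_mul]
      ring
    simp only [this]
    rw [← Finset.sum_mul]
    unfold vv
    rw [Finset.sum_sub_distrib,
      Finset.sum_eq_single (⟨p, by omega⟩ : Fin n) (fun b _ hb => if_neg fun h => hb (Fin.ext h))
        (by simp),
      Finset.sum_eq_single (⟨p + 1, hp⟩ : Fin n) (fun b _ hb => if_neg fun h => hb (Fin.ext h))
        (by simp)]
    simp
  · intro a _
    have : IsFiniteMeasure (volume.restrict (cell n a)) := by unfold cell; infer_instance
    exact Integrable.of_bound (measurable_vvfloor n p).aestronglyMeasurable 1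
      (Filter.Eventually.of_forall fun x => by rw [Real.norm_eq_abs]; exact vv_abs _ _)

lemma integral_gg {n p q : ℕ} (hp : p + 1 < n) :
    ∫ z, gg n p q z ∂((Um n).prod (Um n)) = 0 := by
  unfold gg
  rw [integral_const_mul, integral_prod_mul (fun x : ℝ => vv p ⌊n * x⌋₊)
    (fun x : ℝ => vv q ⌊n * x⌋₊), integral_vv hp]
  simp

lemma step_eq {n : ℕ} (hn : 0 < n) (i j : Fin (n - 1)) (t : ℝ) :
    stepPermuton (pertMatrix n (Pi.single (i, j) t)) =
      ((Um n).prod (Um n)).withDensity (fun z => ENNReal.ofReal (1 + t * gg n i j z)) := by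
  have hn' : (n : ℝ) ≠ 0 := by positivity
  rw [Um_prod, ← Measure.sum_fintype, withDensity_sum, Measure.sum_fintype]
  unfold stepPermuton
  refine Finset.sum_congr rfl fun a _ => ?_
  rw [← Measure.sum_fintype, ← Measure.sum_fintype, withDensity_sum]
  congr 1
  ext1 b
  rw [← withDensity_const]
  refine withDensity_congr_ae ?_
  have hm : MeasurableSet (cell n a ×ˢ cell n b) :=
    (measurableSet_cell n a).prod (measurableSet_cell n b)
  refine (ae_restrict_iff' hm).2 (Filter.Eventually.of_forall fun z hz => ?_)
  change ENNReal.ofReal _ = ENNReal.ofReal _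
  congr 1
  unfold gg
  rw [floor_cell hn hz.1, floor_cell hn hz.2, ← Bmat_eq]
  unfold pertMatrix
  rw [Finset.sum_eq_single (i, j) (fun b _ hb => by simp [Pi.single_eq_of_ne hb]) (by simp)]
  simp only [Pi.single_eq_same]
  field_simp

lemma pi_withDensity_real {X : Type*} [MeasurableSpace X] (μ : Measure X) [IsFiniteMeasure μ]
    (f : X → ℝ) (hf : Measurable f) (hf0 : ∀ x, 0 ≤ f x) (M : ℝ) (hM : ∀ x, f x ≤ M) :
    (Measure.pi fun _ : Fin 4 => μ.withDensity (fun x => ENNReal.ofReal (f x))) =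
      (Measure.pi fun _ : Fin 4 => μ).withDensity
        (fun p => ENNReal.ofReal (∏ i, f (p i))) := by
  have hfi : Integrable f μ := Integrable.of_bound hf.aestronglyMeasurable M
    (Filter.Eventually.of_forall fun x => by
      rw [Real.norm_eq_abs, abs_of_nonneg (hf0 x)]; exact hM x)
  have : IsFiniteMeasure (μ.withDensity (fun x => ENNReal.ofReal (f x))) :=
    isFiniteMeasure_withDensity_ofReal hfi.2
  refine Measure.pi_eq fun s hs => ?_
  have hm : MeasurableSet (Set.pi Set.univ s) := MeasurableSet.univ_pi hs
  have hind : ∀ p : Fin 4 → X, (Set.pi Set.univ s).indicator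
      (fun p => ENNReal.ofReal (∏ i, f (p i))) p =
        ENNReal.ofReal (∏ i, (s i).indicator f (p i)) := by
    intro p
    by_cases hp : p ∈ Set.pi Set.univ s
    · rw [Set.indicator_of_mem hp]
      congr 1
      refine Finset.prod_congr rfl fun i _ => ?_
      rw [Set.indicator_of_mem (hp i trivial)]
    · rw [Set.indicator_of_notMem hp]
      simp only [Set.mem_pi, Set.mem_univ, true_implies, not_forall] at hp
      obtain ⟨i, hi⟩ := hp
      rw [Finset.prod_eq_zero (Finset.mem_univ i) (Set.indicator_of_notMem hi f)]
      simp
  have hnn : ∀ i x, 0 ≤ (s i).indicator f x := fun i x => Set.indicator_nonneg (fun x _ => hf0 x) x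
  rw [withDensity_apply _ hm, ← lintegral_indicator hm]
  simp only [hind]
  rw [← ofReal_integral_eq_lintegral_ofReal, integral_fintype_prod_eq_prod,
    ENNReal.ofReal_prod_of_nonneg]
  · refine Finset.prod_congr rfl fun i _ => ?_
    rw [withDensity_apply _ (hs i), integral_indicator (hs i),
      ofReal_integral_eq_lintegral_ofReal hfi.integrableOn
        (Filter.Eventually.of_forall fun x => hf0 x)]
  · exact fun i _ => integral_nonneg (hnn i)
  · exact Integrable.fintype_prod fun i => hfi.indicator (hs i)
  · exact Filter.Eventually.of_forall fun p => Finset.prod_nonneg fun i _ => hnn i _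

/-- The base measure on quadruples of points. -/
noncomputable def Lam (n : ℕ) : Measure (Fin 4 → ℝ × ℝ) := Measure.pi fun _ : Fin 4 => (Um n).prod (Um n)

instance (n : ℕ) : IsFiniteMeasure (Lam n) := by unfold Lam; infer_instance

/-- Coefficients of the polynomial. -/
noncomputable def coef (n p q : ℕ) (S : Finset (Equiv.Perm (Fin 4))) (T : Finset (Fin 4)) : ℝ :=
  ∫ z, (∑ π ∈ S, (patEvent π).indicator (fun _ => (1 : ℝ)) z) * ∏ k ∈ T, gg n p q (z k) ∂(Lam n)

lemma measurable_prodgg (n p q : ℕ) (T : Finset (Fin 4)) :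
    Measurable (fun z : Fin 4 → ℝ × ℝ => ∏ k ∈ T, gg n p q (z k)) :=
  Finset.measurable_fun_prod _ fun k _ => (measurable_gg n p q).comp (measurable_pi_apply k)

lemma integrable_prodgg (n p q : ℕ) (T : Finset (Fin 4)) :
    Integrable (fun z : Fin 4 → ℝ × ℝ => ∏ k ∈ T, gg n p q (z k)) (Lam n) := by
  refine Integrable.of_bound (measurable_prodgg n p q T).aestronglyMeasurable ((n : ℝ) ^ T.card)
    (Filter.Eventually.of_forall fun z => ?_)
  rw [Real.norm_eq_abs, Finset.abs_prod]
  rw [← Finset.prod_const]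
  exact Finset.prod_le_prod (fun k _ => abs_nonneg _) fun k _ => gg_abs n p q _

lemma integrable_term (n p q : ℕ) (π : Equiv.Perm (Fin 4)) (T : Finset (Fin 4)) :
    Integrable (fun z : Fin 4 → ℝ × ℝ =>
      (patEvent π).indicator (fun _ => (1 : ℝ)) z * ∏ k ∈ T, gg n p q (z k)) (Lam n) := by
  have := (integrable_prodgg n p q T).indicator (measurableSet_patEvent π)
  refine this.congr (Filter.Eventually.of_forall fun z => ?_)
  by_cases h : z ∈ patEvent π <;> simp [h]

lemma hSN_eq {n : ℕ} (hn : 0 < n) (S : Finset (Equiv.Perm (Fin 4))) (i j : Fin (n - 1)) (t : ℝ)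
    (ht : |t| * n ≤ 1) :
    hSN n S (Pi.single (i, j) t) =
      ∑ T ∈ (Finset.univ : Finset (Fin 4)).powerset, t ^ T.card * coef n i j S T := by
  have hb : ∀ z, |t * gg n i j z| ≤ 1 := fun z => by
    rw [abs_mul]
    exact (mul_le_mul_of_nonneg_left (gg_abs n i j z) (abs_nonneg t)).trans ht
  have hf0 : ∀ z, 0 ≤ 1 + t * gg n i j z := fun z => by
    have := (abs_le.1 (hb z)).1; linarith
  have hf2 : ∀ z, 1 + t * gg n i j z ≤ 2 := fun z => by
    have := (abs_le.1 (hb z)).2; linarith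
  have hd : ∀ π : Equiv.Perm (Fin 4),
      PermutonDensity π (stepPermuton (pertMatrix n (Pi.single (i, j) t))) =
        ∑ T ∈ (Finset.univ : Finset (Fin 4)).powerset, t ^ T.card *
          ∫ z, (patEvent π).indicator (fun _ => (1 : ℝ)) z * ∏ k ∈ T, gg n i j (z k) ∂(Lam n) := by
    intro π
    have h1 : PermutonDensity π (stepPermuton (pertMatrix n (Pi.single (i, j) t))) =
        ∫ z in patEvent π, ∏ k, (1 + t * gg n i j (z k)) ∂(Lam n) := by
      unfold PermutonDensity
      rw [step_eq hn, pi_withDensity_real _ _ (((measurable_gg n i j).const_mul t).const_add 1)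
        hf0 2 hf2]
      change ((Measure.withDensity (Lam n) _) (patEvent π)).toReal = _
      rw [withDensity_apply _ (measurableSet_patEvent π),
        integral_eq_lintegral_of_nonneg_ae]
      · exact Filter.Eventually.of_forall fun z => Finset.prod_nonneg fun k _ => hf0 _
      · refine Measurable.aestronglyMeasurable ?_
        exact Finset.measurable_fun_prod _ fun k _ =>
          (((measurable_gg n i j).comp (measurable_pi_apply k)).const_mul t).const_add 1
    rw [h1, ← integral_indicator (measurableSet_patEvent π)]
    have h2 : ∀ z, (patEvent π).indicator (fun z => ∏ k, (1 + t * gg n i j (z k))) z =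
        ∑ T ∈ (Finset.univ : Finset (Fin 4)).powerset, t ^ T.card *
          ((patEvent π).indicator (fun _ => (1 : ℝ)) z * ∏ k ∈ T, gg n i j (z k)) := by
      intro z
      by_cases h : z ∈ patEvent π
      · simp only [Set.indicator_of_mem h, one_mul]
        rw [Finset.prod_one_add]
        refine Finset.sum_congr rfl fun T _ => ?_
        rw [Finset.prod_mul_distrib, Finset.prod_const]
      · simp [Set.indicator_of_notMem h]
    simp only [h2]
    rw [integral_finsetSum _ fun T _ => (integrable_term n i j π T).const_mul _]
    simp only [integral_const_mul]
  unfold hSN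
  simp only [hd]
  rw [Finset.sum_comm]
  refine Finset.sum_congr rfl fun T _ => ?_
  rw [← Finset.mul_sum]
  congr 1
  unfold coef
  simp only [Finset.sum_mul]
  rw [integral_finsetSum _ fun π _ => integrable_term n i j π T]

lemma twist_mp (n : ℕ) (τ : Equiv.Perm (Fin 4)) : MeasurePreserving (twist τ) (Lam n) (Lam n) := by
  have h1 := measurePreserving_arrowProdEquivProdArrow ℝ ℝ (Fin 4) (fun _ => Um n) (fun _ => Um n)
  have h2 := measurePreserving_piCongrLeft (fun _ : Fin 4 => Um n) τ.symm
  have h3 := (MeasurePreserving.id (Measure.pi fun _ : Fin 4 => Um n)).prod h2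
  have h4 := (h1.symm.comp h3).comp h1
  have he : twist τ = ((MeasurableEquiv.arrowProdEquivProdArrow ℝ ℝ (Fin 4)).symm ∘
        Prod.map id (MeasurableEquiv.piCongrLeft (fun _ : Fin 4 => ℝ) τ.symm)) ∘
      (MeasurableEquiv.arrowProdEquivProdArrow ℝ ℝ (Fin 4)) := by
    funext p
    funext i
    have := Equiv.piCongrLeft_apply_apply (fun _ : Fin 4 => ℝ) τ.symm (fun k => (p k).2) (τ i)
    simp only [Equiv.symm_apply_apply] at this
    exact Prod.ext rfl this.symm
  rw [he]
  exact h4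

lemma ae_inj_pi (n : ℕ) :
    ∀ᵐ x ∂(Measure.pi fun _ : Fin 4 => Um n), Function.Injective x := by
  have hac : (Measure.pi fun _ : Fin 4 => Um n) ≪ (volume : Measure (Fin 4 → ℝ)) := by
    rw [Um_eq, ← Measure.restrict_pi_pi]
    exact Measure.restrict_le_self.absolutelyContinuous
  refine hac.ae_le ?_
  have : ∀ i j : Fin 4, i ≠ j → ∀ᵐ x : Fin 4 → ℝ, x i ≠ x j := by
    intro i j hij
    let L : Submodule ℝ (Fin 4 → ℝ) :=
      LinearMap.ker (LinearMap.proj (R := ℝ) (φ := fun _ : Fin 4 => ℝ) i - LinearMap.proj j)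
    have hL : L ≠ ⊤ := by
      intro h
      have h2 : (Pi.single i 1 : Fin 4 → ℝ) ∈ L := h ▸ Submodule.mem_top
      simp [L, Pi.single_eq_of_ne hij.symm] at h2
    have := Measure.addHaar_submodule (volume : Measure (Fin 4 → ℝ)) L hL
    rw [ae_iff]
    convert this using 2
    ext x
    simp [L, sub_eq_zero]
  have h2 : ∀ᵐ x : Fin 4 → ℝ, ∀ i j : Fin 4, i ≠ j → x i ≠ x j := by
    simp only [ae_all_iff]
    exact this
  filter_upwards [h2] with x hx i j hij
  by_contra h
  exact hx i j h hij

lemma ae_inj (n : ℕ) : ∀ᵐ p ∂(Lam n),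
    Function.Injective (fun i => (p i).1) ∧ Function.Injective (fun i => (p i).2) := by
  have h1 := measurePreserving_arrowProdEquivProdArrow ℝ ℝ (Fin 4) (fun _ => Um n) (fun _ => Um n)
  have h2 := (Measure.quasiMeasurePreserving_fst.comp h1.quasiMeasurePreserving).ae (ae_inj_pi n)
  have h3 := (Measure.quasiMeasurePreserving_snd.comp h1.quasiMeasurePreserving).ae (ae_inj_pi n)
  filter_upwards [h2, h3] with p hp hq
  exact ⟨hp, hq⟩

lemma integral_single {n p q : ℕ} (hp : p + 1 < n) (k : Fin 4) :
    ∫ z, gg n p q (z k) ∂(Lam n) = 0 := by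
  have : ∀ z : Fin 4 → ℝ × ℝ, gg n p q (z k) =
      ∏ i, (fun i => if i = k then gg n p q else fun _ => 1) i (z i) := by
    intro z
    rw [Finset.prod_eq_single k]
    · simp
    · intro b _ hb; simp [hb]
    · simp
  simp only [this]
  unfold Lam
  rw [integral_fintype_prod_eq_prod]
  refine Finset.prod_eq_zero (Finset.mem_univ k) ?_
  simp [integral_gg hp]

open scoped Classical in
lemma coef_single {n p q : ℕ} (hp : p + 1 < n) (S : Finset (Equiv.Perm (Fin 4)))
    (c : ℕ) (hC : ∀ i j : Fin 4, coverMatrix S i j = c) (k : Fin 4) :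
    coef n p q S {k} = 0 := by
  set F : (Fin 4 → ℝ × ℝ) → ℝ := fun z => ∑ π ∈ S, (patEvent π).indicator (fun _ => (1 : ℝ)) z
    with hF
  set R := Finset.univ.filter (fun τ : Equiv.Perm (Fin 4) => τ k = k) with hR
  have hFm : Measurable F := Finset.measurable_fun_sum _ fun π _ =>
    measurable_const.indicator (measurableSet_patEvent π)
  have hgm : Measurable fun z : Fin 4 → ℝ × ℝ => gg n p q (z k) :=
    (measurable_gg n p q).comp (measurable_pi_apply k)
  have hint : Integrable (fun z => F z * gg n p q (z k)) (Lam n) := by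
    have := integrable_finsetSum S fun π _ => integrable_term n p q π {k}
    refine this.congr (Filter.Eventually.of_forall fun z => ?_)
    simp [hF, Finset.sum_mul]
  have h0 : coef n p q S {k} = ∫ z, F z * gg n p q (z k) ∂(Lam n) := by
    unfold coef
    simp [hF]
  have h1 : ∀ τ ∈ R, ∫ z, F (twist τ z) * gg n p q (z k) ∂(Lam n) = coef n p q S {k} ∧
      Integrable (fun z => F (twist τ z) * gg n p q (z k)) (Lam n) := by
    intro τ hτ
    have hτk : τ k = k := (Finset.mem_filter.1 hτ).2
    have he : (fun z => F (twist τ z) * gg n p q (z k)) =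
        (fun z => F z * gg n p q (z k)) ∘ twist τ := by
      funext z
      simp [twist, hτk]
    constructor
    · rw [h0, he]
      conv_rhs => rw [← (twist_mp n τ).map_eq]
      rw [integral_map (twist_mp n τ).measurable.aemeasurable
        (show Measurable (fun z => F z * gg n p q (z k)) from hFm.mul hgm).aestronglyMeasurable]
      rfl
    · rw [he]
      exact (twist_mp n τ).integrable_comp_of_integrable hint
  have h2 : ∑ τ ∈ R, ∫ z, F (twist τ z) * gg n p q (z k) ∂(Lam n) = 0 := by
    rw [← integral_finsetSum _ fun τ hτ => (h1 τ hτ).2]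
    rw [integral_congr_ae (g := fun z => (c : ℝ) * gg n p q (z k))]
    · rw [integral_const_mul, integral_single hp, mul_zero]
    · filter_upwards [ae_inj n] with z hz
      rw [← comb_count S c hC k z hz.1 hz.2, Finset.sum_mul]
  rw [Finset.sum_congr rfl fun τ hτ => (h1 τ hτ).1, Finset.sum_const, nsmul_eq_mul] at h2
  rcases mul_eq_zero.1 h2 with h | h
  · exfalso
    have : (1 : Equiv.Perm (Fin 4)) ∈ R := by simp [hR]
    rw [Nat.cast_eq_zero, Finset.card_eq_zero] at h
    rw [h] at this
    simp at this
  · exact h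

theorem statement_13 {n : ℕ} (hn : 2 ≤ n) (S : Finset (Equiv.Perm (Fin 4)))
    (hC : ∃ c : ℕ, ∀ i j : Fin 4, coverMatrix S i j = c) :
    ∀ i j : Fin (n - 1), deriv (fun t : ℝ => hSN n S (Pi.single (i, j) t)) 0 = 0 := by
  obtain ⟨c, hC⟩ := hC
  intro i j
  have hn0 : 0 < n := by omega
  have hnR : (0 : ℝ) < n := by exact_mod_cast hn0
  have hi : (i : ℕ) + 1 < n := by omega
  have hev : (fun t : ℝ => hSN n S (Pi.single (i, j) t)) =ᶠ[nhds 0] fun t : ℝ =>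
      ∑ T ∈ (Finset.univ : Finset (Fin 4)).powerset, t ^ T.card * coef n i j S T := by
    filter_upwards [Metric.ball_mem_nhds (0 : ℝ) (one_div_pos.2 hnR)] with t ht
    apply hSN_eq hn0
    rw [Metric.mem_ball, dist_zero_right, Real.norm_eq_abs, lt_div_iff₀ hnR] at ht
    exact ht.le
  rw [hev.deriv_eq]
  have hd : HasDerivAt (fun t : ℝ =>
      ∑ T ∈ (Finset.univ : Finset (Fin 4)).powerset, t ^ T.card * coef n i j S T)
      (∑ T ∈ (Finset.univ : Finset (Fin 4)).powerset, 0) 0 := by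
    refine HasDerivAt.fun_sum fun T _ => ?_
    have h := (hasDerivAt_pow T.card (0 : ℝ)).mul_const (coef n i j S T)
    have he : (0 : ℝ) = ↑T.card * 0 ^ (T.card - 1) * coef n (↑i) (↑j) S T := by
      by_cases h1 : T.card = 1
      · obtain ⟨k, rfl⟩ := Finset.card_eq_one.1 h1
        rw [coef_single hi S c hC k, mul_zero]
      · by_cases h2 : T.card = 0
        · simp [h2]
        · rw [zero_pow (by omega)]
          simp
    rw [← he] at h
    exact h
  rw [hd.deriv]
  simp
end

section
/- Let S be a set of 4-permutations whose cover matrix is not constant (not all sixteen entries are equal). Then there exists an integer n ≥ 2 such that the gradient ∇h_{S,n}(0,…,0) = (∂h_{S,n}/∂x_{ij}(0,…,0))_{i,j∈[n−1]} is non-zero. -/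
open MeasureTheory Filter

/-- Lebesgue measure on the `p`-th of four equal intervals. -/
noncomputable def cellM (p : Fin 4) : Measure ℝ :=
  volume.restrict (Set.Ico ((p : ℝ) / (4 : ℕ)) (((p : ℝ) + 1) / (4 : ℕ)))

/-- The event that the points form the pattern `π`. -/
def patE (π : Equiv.Perm (Fin 4)) : Set (Fin 4 → ℝ × ℝ) :=
  {p : Fin 4 → ℝ × ℝ | ∃ σ : Equiv.Perm (Fin 4),
      StrictMono (fun i => (p (σ i)).1) ∧
        ∀ i j : Fin 4, (p (σ i)).2 < (p (σ j)).2 ↔ π i < π j}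

/-- Lebesgue measure of the configurations ordered by `σ` in the cells `a`. -/
noncomputable def Xv (a : Fin 4 → Fin 4) (σ : Equiv.Perm (Fin 4)) : ℝ :=
  ((Measure.pi fun l => cellM (a l)) {x : Fin 4 → ℝ | StrictMono (fun i => x (σ i))}).toReal

/-- The probability mass of the pattern `π` in the cells `c`. -/
noncomputable def Mv (π : Equiv.Perm (Fin 4)) (c : Fin 4 → Fin 4 × Fin 4) : ℝ :=
  ((Measure.pi fun l => (cellM (c l).1).prod (cellM (c l).2)) (patE π)).toReal

instance cellM_finite (p : Fin 4) : IsFiniteMeasure (cellM p) := by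
  unfold cellM
  constructor
  simp

lemma cellM_univ (p : Fin 4) : cellM p Set.univ = ENNReal.ofReal (1/4) := by
  unfold cellM
  simp only [Measure.restrict_apply_univ, Real.volume_Ico]
  congr 1
  push_cast
  ring

lemma pi_sum_smul {ι α : Type*} [Fintype ι] [MeasurableSpace α] (w : ι → ℝ)
    (hw : ∀ i, 0 ≤ w i) (m : ι → Measure α) [∀ i, IsFiniteMeasure (m i)] :
    (Measure.pi fun _ : Fin 4 => ∑ i, ENNReal.ofReal (w i) • m i) =
      ∑ c : Fin 4 → ι, ENNReal.ofReal (∏ l, w (c l)) • Measure.pi fun l => m (c l) := by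
  classical
  have hf : ∀ i, IsFiniteMeasure (ENNReal.ofReal (w i) • m i) := fun i =>
    Measure.smul_finite _ ENNReal.ofReal_ne_top
  have : IsFiniteMeasure (∑ i, ENNReal.ofReal (w i) • m i) := by
    infer_instance
  refine Measure.pi_eq fun s hs => ?_
  simp only [Measure.coe_finsetSum, Finset.sum_apply, Measure.smul_apply, Measure.pi_pi,
    smul_eq_mul]
  rw [Finset.prod_univ_sum]
  rw [Fintype.piFinset_univ]
  refine Finset.sum_congr rfl fun c _ => ?_
  rw [Finset.prod_mul_distrib, ENNReal.ofReal_prod_of_nonneg (fun i _ => hw _)]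

lemma step_eq_s14 (A : Matrix (Fin 4) (Fin 4) ℝ) :
    stepPermuton A = ∑ c : Fin 4 × Fin 4, ENNReal.ofReal (A c.1 c.2 * 4) •
      (cellM c.1).prod (cellM c.2) := by
  unfold stepPermuton cellM
  rw [Fintype.sum_prod_type]
  refine Finset.sum_congr rfl fun a _ => Finset.sum_congr rfl fun b _ => ?_
  rw [Measure.prod_restrict, Measure.volume_eq_prod]
  norm_num

lemma density_eq (π : Equiv.Perm (Fin 4)) (A : Matrix (Fin 4) (Fin 4) ℝ)
    (hA : ∀ i j, 0 ≤ A i j) :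
    PermutonDensity π (stepPermuton A) =
      ∑ c : Fin 4 → Fin 4 × Fin 4, (∏ l, (A (c l).1 (c l).2 * 4)) * Mv π c := by
  unfold PermutonDensity
  rw [step_eq_s14, pi_sum_smul (fun c : Fin 4 × Fin 4 => A c.1 c.2 * 4)
    (fun c => mul_nonneg (hA _ _) (by norm_num))]
  simp only [Measure.coe_finsetSum, Finset.sum_apply, Measure.smul_apply, smul_eq_mul]
  rw [ENNReal.toReal_sum (fun c _ => ENNReal.mul_ne_top ENNReal.ofReal_ne_top
    (measure_ne_top _ _))]
  refine Finset.sum_congr rfl fun c _ => ?_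
  rw [ENNReal.toReal_mul, ENNReal.toReal_ofReal
    (Finset.prod_nonneg fun l _ => mul_nonneg (hA _ _) (by norm_num))]
  rfl

lemma strictMono_comp_unique {n : ℕ} {x : Fin n → ℝ} {σ τ : Equiv.Perm (Fin n)}
    (h1 : StrictMono (fun i => x (σ i))) (h2 : StrictMono (fun i => x (τ i))) : σ = τ := by
  have h := Tuple.unique_monotone (f := x) (σ := σ) (τ := τ) h1.monotone h2.monotone
  have hx : Function.Injective x := by
    have := h1.injective
    intro a b hab
    have h3 := @this (σ.symm a) (σ.symm b) (by simpa using hab)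
    simpa using h3
  ext i
  exact congrArg Fin.val (hx (congrFun h i))

lemma measurableSet_sm (σ : Equiv.Perm (Fin 4)) :
    MeasurableSet {x : Fin 4 → ℝ | StrictMono (fun i => x (σ i))} := by
  have : {x : Fin 4 → ℝ | StrictMono (fun i => x (σ i))} =
      ⋂ i, ⋂ j, ⋂ (_ : i < j), {x : Fin 4 → ℝ | x (σ i) < x (σ j)} := by
    ext x
    simp [StrictMono]
  rw [this]
  refine MeasurableSet.iInter fun i => MeasurableSet.iInter fun j => MeasurableSet.iInter fun _ => ?_
  exact measurableSet_lt (measurable_pi_apply _) (measurable_pi_apply _)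

lemma Mv_eq (π : Equiv.Perm (Fin 4)) (c : Fin 4 → Fin 4 × Fin 4) :
    Mv π c = ∑ σ : Equiv.Perm (Fin 4),
      Xv (fun l => (c l).1) σ * Xv (fun l => (c l).2) (σ * π⁻¹) := by
  have hmp := measurePreserving_arrowProdEquivProdArrow ℝ ℝ (Fin 4)
    (fun l => cellM (c l).1) (fun l => cellM (c l).2)
  have hset : patE π = (MeasurableEquiv.arrowProdEquivProdArrow ℝ ℝ (Fin 4)) ⁻¹'
      (⋃ σ : Equiv.Perm (Fin 4), {x : Fin 4 → ℝ | StrictMono (fun i => x (σ i))} ×ˢ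
        {x : Fin 4 → ℝ | StrictMono (fun i => x ((σ * π⁻¹) i))}) := by
    ext p
    simp only [patE, Set.mem_ofPred_eq, Set.mem_preimage, Set.mem_iUnion, Set.mem_prod]
    refine exists_congr fun σ => and_congr Iff.rfl ?_
    constructor
    · intro h i j hij
      have := (h (π⁻¹ i) (π⁻¹ j)).2 (by simpa using hij)
      exact this
    · intro h i j
      have h2 := h.lt_iff_lt (a := π i) (b := π j)
      rw [← h2]
      simp [MeasurableEquiv.arrowProdEquivProdArrow, Equiv.arrowProdEquivProdArrow]
  have hmeas : ∀ σ : Equiv.Perm (Fin 4), MeasurableSet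
      ({x : Fin 4 → ℝ | StrictMono (fun i => x (σ i))} ×ˢ
        {x : Fin 4 → ℝ | StrictMono (fun i => x ((σ * π⁻¹) i))}) :=
    fun σ => (measurableSet_sm _).prod (measurableSet_sm _)
  unfold Mv
  rw [hset, hmp.measure_preimage (MeasurableSet.iUnion hmeas).nullMeasurableSet,
    measure_iUnion _ hmeas, tsum_fintype, ENNReal.toReal_sum (fun c _ => measure_ne_top _ _)]
  · refine Finset.sum_congr rfl fun σ _ => ?_
    rw [Measure.prod_prod, ENNReal.toReal_mul]
    rfl
  · intro σ τ hne
    rw [Function.onFun, Set.disjoint_left]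
    rintro ⟨x, y⟩ ⟨h1, _⟩ ⟨h2, _⟩
    exact hne (strictMono_comp_unique h1 h2)

lemma Xv_perm (a : Fin 4 → Fin 4) (σ : Equiv.Perm (Fin 4)) : Xv a σ = Xv (a ∘ σ) 1 := by
  unfold Xv
  have hmp := measurePreserving_piCongrLeft (fun l => cellM (a l)) σ
  rw [← hmp.measure_preimage (measurableSet_sm σ).nullMeasurableSet]
  congr 2
  ext x
  simp only [Set.mem_preimage, Set.mem_ofPred_eq, Equiv.Perm.coe_one, id]
  have : ∀ i, (MeasurableEquiv.piCongrLeft (fun _ => ℝ) σ) x (σ i) = x i := by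
    intro i
    rw [MeasurableEquiv.coe_piCongrLeft]
    exact Equiv.piCongrLeft_apply_apply (fun _ => ℝ) σ x i
  simp only [this]

lemma Xv_zero (a : Fin 4 → Fin 4) (σ : Equiv.Perm (Fin 4)) (h : ¬ Monotone (a ∘ σ)) :
    Xv a σ = 0 := by
  unfold Xv
  have hm : (Measure.pi fun l => cellM (a l)) = (volume : Measure (Fin 4 → ℝ)).restrict
      (Set.univ.pi fun l => Set.Ico ((a l : ℝ) / (4 : ℕ)) (((a l : ℝ) + 1) / (4 : ℕ))) := by
    rw [volume_pi, Measure.restrict_pi_pi]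
    rfl
  rw [hm, Measure.restrict_apply (measurableSet_sm σ)]
  have : {x : Fin 4 → ℝ | StrictMono (fun i => x (σ i))} ∩
    (Set.univ.pi fun l => Set.Ico ((a l : ℝ) / (4 : ℕ)) (((a l : ℝ) + 1) / (4 : ℕ))) = ∅ := by
    rw [Set.eq_empty_iff_forall_notMem]
    rintro x ⟨hx, hx2⟩
    apply h
    intro i j hij
    by_contra hlt
    have hlt' : a (σ j) < a (σ i) := not_le.mp hlt
    have h1 := (hx2 (σ i) (Set.mem_univ _)).1
    have h2 := (hx2 (σ j) (Set.mem_univ _)).2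
    have h3 : x (σ i) ≤ x (σ j) := hx.monotone hij
    have h4 : ((a (σ j) : ℕ) : ℝ) + 1 ≤ ((a (σ i) : ℕ) : ℝ) := by
      exact_mod_cast hlt'
    push_cast at h1 h2
    linarith
  rw [this]
  simp

lemma ae_inj_s14 (a : Fin 4 → Fin 4) (i j : Fin 4) (hij : i ≠ j) :
    (Measure.pi fun l => cellM (a l)) {x : Fin 4 → ℝ | x i = x j} = 0 := by
  have hm : (Measure.pi fun l => cellM (a l)) = (volume : Measure (Fin 4 → ℝ)).restrict
      (Set.univ.pi fun l => Set.Ico ((a l : ℝ) / (4 : ℕ)) (((a l : ℝ) + 1) / (4 : ℕ))) := by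
    rw [volume_pi, Measure.restrict_pi_pi]
    rfl
  rw [hm]
  refine Measure.restrict_apply_eq_zero' (MeasurableSet.univ_pi fun _ => measurableSet_Ico) |>.2 ?_
  refine measure_mono_null Set.inter_subset_left ?_
  let L : (Fin 4 → ℝ) →ₗ[ℝ] ℝ := LinearMap.proj (R := ℝ) (φ := fun _ : Fin 4 => ℝ) i - LinearMap.proj j
  have hs : {x : Fin 4 → ℝ | x i = x j} = (LinearMap.ker L : Set (Fin 4 → ℝ)) := by
    ext x
    simp [L, sub_eq_zero]
  rw [hs]
  refine Measure.addHaar_submodule _ _ ?_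
  intro htop
  have : Pi.single i (1 : ℝ) ∈ LinearMap.ker L := by rw [htop]; trivial
  simp [L, hij.symm] at this

lemma Xv_sum (a : Fin 4 → Fin 4) : ∑ σ, Xv a σ = 1 / 256 := by
  unfold Xv
  rw [← ENNReal.toReal_sum (fun c _ => measure_ne_top _ _), ← tsum_fintype (L := .unconditional _),
    ← measure_iUnion _ measurableSet_sm]
  · have : (Measure.pi fun l => cellM (a l))
        (⋃ σ : Equiv.Perm (Fin 4), {x : Fin 4 → ℝ | StrictMono (fun i => x (σ i))}) =
        (Measure.pi fun l => cellM (a l)) Set.univ := by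
      refine measure_congr ?_
      have hae : ∀ᵐ x ∂(Measure.pi fun l => cellM (a l)), ∀ i j, i ≠ j → x i ≠ x j := by
        rw [ae_all_iff]; intro i
        rw [ae_all_iff]; intro j
        by_cases hij : i = j
        · simp [hij]
        · rw [ae_iff]
          simpa [hij] using ae_inj_s14 a i j hij
      filter_upwards [hae] with x hx
      apply propext
      refine ⟨fun _ => trivial, fun _ => ?_⟩
      refine Set.mem_iUnion.2 ⟨Tuple.sort x, ?_⟩
      refine (Tuple.monotone_sort x).strictMono_of_injective ?_
      refine Function.Injective.comp ?_ (Tuple.sort x).injective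
      intro i j h
      by_contra hne
      exact hx i j hne h
    rw [this, Measure.pi_univ]
    simp only [cellM_univ]
    rw [ENNReal.toReal_prod]
    simp only [Finset.prod_const, Finset.card_univ, Fintype.card_fin]
    rw [ENNReal.toReal_ofReal (by norm_num)]
    norm_num
  · intro σ τ hne
    rw [Function.onFun, Set.disjoint_left]
    intro x h1 h2
    exact hne (strictMono_comp_unique h1 h2)

/-- Marginal masses: `x_k` lies in the cell `p` and `x` is increasing. -/
noncomputable def gv (p k : Fin 4) : ℝ :=
  ∑ a : Fin 4 → Fin 4, if a k = p then Xv a 1 else 0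

/-- Number of functions whose sorted version has value `p` at `k`. -/
def Nv (p k : Fin 4) : ℕ :=
  (Finset.univ.filter fun b : Fin 4 → Fin 4 =>
    (k : ℕ) < (Finset.univ.filter fun i => b i ≤ p).card ∧
      ¬ (k : ℕ) < (Finset.univ.filter fun i => b i < p).card).card

lemma marg (σ : Equiv.Perm (Fin 4)) (p l : Fin 4) :
    (∑ a : Fin 4 → Fin 4, if a l = p then Xv a σ else 0) = gv p (σ⁻¹ l) := by
  unfold gv
  rw [← Equiv.sum_comp (Equiv.arrowCongr σ (Equiv.refl (Fin 4)))]
  refine Finset.sum_congr rfl fun a _ => ?_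
  have h1 : (Equiv.arrowCongr σ (Equiv.refl (Fin 4))) a = a ∘ ⇑σ⁻¹ := rfl
  have h2 : (a ∘ ⇑σ⁻¹) ∘ ⇑σ = a := by
    ext i
    simp
  rw [h1, Xv_perm _ σ, h2]
  rfl

lemma sorted_iff (b : Fin 4 → Fin 4) (σ : Equiv.Perm (Fin 4)) (hm : Monotone (b ∘ σ))
    (p k : Fin 4) : b (σ k) = p ↔
    ((k : ℕ) < (Finset.univ.filter fun i => b i ≤ p).card ∧
      ¬ (k : ℕ) < (Finset.univ.filter fun i => b i < p).card) := by
  have e1 : (Finset.univ.filter fun i => b i ≤ p).card =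
      (Finset.univ.filter fun i => (b ∘ σ) i ≤ p).card := by
    rw [← Finset.card_map σ.toEmbedding (s := Finset.univ.filter fun i => (b ∘ σ) i ≤ p)]
    congr 1
    ext i
    simp
  have e2 : (Finset.univ.filter fun i => b i < p).card =
      (Finset.univ.filter fun i => (b ∘ σ) i < p).card := by
    rw [← Finset.card_map σ.toEmbedding (s := Finset.univ.filter fun i => (b ∘ σ) i < p)]
    congr 1
    ext i
    simp
  rw [e1, e2]
  have h1 := Tuple.lt_card_le_iff_apply_le_of_monotone (a := p) (j := k) hm
  have h2 := Tuple.lt_card_lt_iff_apply_lt_of_monotone (a := p) (j := k) hm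
  rw [h1, h2, not_lt]
  exact le_antisymm_iff

lemma gv_val (p k : Fin 4) : gv p k = (Nv p k : ℝ) / 6144 := by
  have h1 : ∑ σ : Equiv.Perm (Fin 4), gv p k = 24 * gv p k := by
    rw [Finset.sum_const, Finset.card_univ, Fintype.card_perm, Fintype.card_fin]
    norm_num [Nat.factorial]
  have h2 : ∑ σ : Equiv.Perm (Fin 4), gv p k = (Nv p k : ℝ) * (1 / 256) := by
    have : ∀ σ : Equiv.Perm (Fin 4), gv p k =
        ∑ a : Fin 4 → Fin 4, if a (σ k) = p then Xv a σ else 0 := by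
      intro σ
      rw [marg]
      simp
    rw [Finset.sum_congr rfl fun σ _ => this σ, Finset.sum_comm, Nv, Finset.card_filter,
      Nat.cast_sum, Finset.sum_mul]
    refine Finset.sum_congr rfl fun b _ => ?_
    rw [← Xv_sum b, Finset.mul_sum]
    refine Finset.sum_congr rfl fun σ _ => ?_
    by_cases hm : Monotone (b ∘ σ)
    · simp only [sorted_iff b σ hm p k]
      split_ifs <;> simp
    · rw [Xv_zero b σ hm]
      simp
  linarith

lemma main_sum (B : Fin 4 → Fin 4 → ℝ) (π : Equiv.Perm (Fin 4)) :
    ∑ c : Fin 4 → Fin 4 × Fin 4, (∑ l, B (c l).1 (c l).2) * Mv π c =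
      24 * ∑ k, ∑ p, ∑ q, B p q * gv p k * gv q (π k) := by
  have key : ∀ (σ τ : Equiv.Perm (Fin 4)) (l : Fin 4),
      ∑ c : Fin 4 → Fin 4 × Fin 4, B (c l).1 (c l).2 *
        (Xv (fun l => (c l).1) σ * Xv (fun l => (c l).2) τ) =
      ∑ p, ∑ q, B p q * gv p (σ⁻¹ l) * gv q (τ⁻¹ l) := by
    intro σ τ l
    rw [← Equiv.sum_comp (Equiv.arrowProdEquivProdArrow (Fin 4) (fun _ => Fin 4)
      (fun _ => Fin 4)).symm, Fintype.sum_prod_type]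
    have : ∀ a b : Fin 4 → Fin 4, B (a l) (b l) * (Xv a σ * Xv b τ) =
        ∑ p, ∑ q, B p q * (if a l = p then Xv a σ else 0) * (if b l = q then Xv b τ else 0) := by
      intro a b
      simp [mul_assoc]
    change ∑ a : Fin 4 → Fin 4, ∑ b : Fin 4 → Fin 4, B (a l) (b l) * (Xv a σ * Xv b τ) = _
    simp only [this]
    rw [Finset.sum_congr rfl fun a _ => Finset.sum_comm, Finset.sum_comm]
    refine Finset.sum_congr rfl fun p _ => ?_
    rw [Finset.sum_congr rfl fun a _ => Finset.sum_comm, Finset.sum_comm]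
    refine Finset.sum_congr rfl fun q _ => ?_
    rw [← marg σ p l, ← marg τ q l, mul_assoc, Finset.sum_mul_sum, Finset.mul_sum]
    refine Finset.sum_congr rfl fun a _ => ?_
    rw [Finset.mul_sum]
    exact Finset.sum_congr rfl fun b _ => mul_assoc _ _ _
  calc _ = ∑ σ : Equiv.Perm (Fin 4), ∑ l, ∑ c : Fin 4 → Fin 4 × Fin 4, B (c l).1 (c l).2 *
        (Xv (fun l => (c l).1) σ * Xv (fun l => (c l).2) (σ * π⁻¹)) := by
        simp only [Mv_eq, Finset.sum_mul, Finset.mul_sum]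
        rw [Finset.sum_comm, Finset.sum_congr rfl fun a _ => Finset.sum_comm, Finset.sum_comm]
    _ = ∑ σ : Equiv.Perm (Fin 4), ∑ k, ∑ p, ∑ q, B p q * gv p k * gv q (π k) := by
        refine Finset.sum_congr rfl fun σ _ => ?_
        simp only [key]
        rw [← Equiv.sum_comp σ]
        simp
    _ = _ := by
        rw [Finset.sum_const, Finset.card_univ, Fintype.card_perm, Fintype.card_fin]
        norm_num [Nat.factorial]

lemma pert_eq (i j : Fin 3) (t : ℝ) (a b : Fin 4) :
    pertMatrix 4 (Pi.single (i, j) t) a b = 1 / 4 + t * Bmat 4 i j a b := by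
  unfold pertMatrix
  rw [Finset.sum_eq_single ((i, j) : Fin (4 - 1) × Fin (4 - 1))]
  · simp
  · intro p _ hp
    rw [Pi.single_eq_of_ne hp]
    simp
  · simp

lemma Bmat_bound (i j : Fin 3) (a b : Fin 4) : |Bmat 4 i j a b| ≤ 4 := by
  unfold Bmat
  split_ifs <;> norm_num

lemma hSN_deriv (S : Finset (Equiv.Perm (Fin 4))) (i j : Fin 3) :
    deriv (fun t : ℝ => hSN 4 S (Pi.single (i, j) t)) 0 =
      96 * ∑ π ∈ S, ∑ k, ∑ p, ∑ q, Bmat 4 i j p q * gv p k * gv q (π k) := by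
  have hev : (fun t : ℝ => hSN 4 S (Pi.single (i, j) t)) =ᶠ[nhds 0] fun t =>
      ∑ π ∈ S, ∑ c : Fin 4 → Fin 4 × Fin 4,
        (∏ l, (1 + t * (4 * Bmat 4 i j (c l).1 (c l).2))) * Mv π c := by
    filter_upwards [Metric.ball_mem_nhds (0 : ℝ) (ε := 1 / 16) (by norm_num)] with t ht
    unfold hSN
    refine Finset.sum_congr rfl fun π _ => ?_
    rw [density_eq]
    · refine Finset.sum_congr rfl fun c _ => ?_
      congr 1
      refine Finset.prod_congr rfl fun l _ => ?_
      rw [pert_eq]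
      ring
    · intro a b
      rw [pert_eq]
      have h1 : |t| < 1 / 16 := by simpa using ht
      have h2 : |t * Bmat 4 i j a b| ≤ 1 / 16 * 4 := by
        rw [abs_mul]
        exact mul_le_mul h1.le (Bmat_bound i j a b) (abs_nonneg _) (by norm_num)
      have := (abs_le.1 h2).1
      linarith
  rw [hev.deriv_eq]
  refine HasDerivAt.deriv ?_
  rw [Finset.mul_sum]
  refine HasDerivAt.fun_sum fun π _ => ?_
  have e : 96 * ∑ k, ∑ p, ∑ q, Bmat 4 i j p q * gv p k * gv q (π k) =
      ∑ c : Fin 4 → Fin 4 × Fin 4, (∑ l, 4 * Bmat 4 i j (c l).1 (c l).2) * Mv π c := by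
    have := main_sum (Bmat 4 i j) π
    simp only [← Finset.mul_sum, mul_assoc] at this ⊢
    rw [this]
    ring
  rw [e]
  refine HasDerivAt.fun_sum fun c _ => HasDerivAt.mul_const ?_ _
  have hd := HasDerivAt.fun_finsetProd (u := Finset.univ) (x := (0 : ℝ))
    (f := fun (l : Fin 4) (t : ℝ) => 1 + t * (4 * Bmat 4 i j (c l).1 (c l).2))
    (f' := fun l => 4 * Bmat 4 i j (c l).1 (c l).2) (fun l _ => by
      simpa using ((hasDerivAt_id (0 : ℝ)).mul_const
        (4 * Bmat 4 i j (c l).1 (c l).2)).const_add 1)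
  simpa using hd

lemma Bmat_sum (u v : Fin 4 → ℝ) (i j : Fin 3) :
    ∑ p, ∑ q, Bmat 4 i j p q * u p * v q =
      (u i.castSucc - u i.succ) * (v j.castSucc - v j.succ) := by
  fin_cases i <;> fin_cases j <;> simp [Fin.sum_univ_four, Bmat] <;> ring

lemma cover_sum (S : Finset (Equiv.Perm (Fin 4))) (f : Fin 4 → Fin 4 → ℝ) :
    ∑ π ∈ S, ∑ k, f k (π k) = ∑ k, ∑ m, (coverMatrix S m k : ℝ) * f k m := by
  classical
  rw [Finset.sum_comm]
  refine Finset.sum_congr rfl fun k _ => ?_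
  unfold coverMatrix
  simp only [Finset.card_filter, Nat.cast_sum, Finset.sum_mul]
  rw [Finset.sum_comm]
  refine Finset.sum_congr rfl fun π _ => ?_
  simp

lemma cover_col (S : Finset (Equiv.Perm (Fin 4))) (k : Fin 4) :
    ∑ m, (coverMatrix S m k : ℝ) = S.card := by
  classical
  unfold coverMatrix
  simp only [Finset.card_filter, Nat.cast_sum]
  rw [Finset.sum_comm]
  simp

lemma cover_row (S : Finset (Equiv.Perm (Fin 4))) (m : Fin 4) :
    ∑ k, (coverMatrix S m k : ℝ) = S.card := by
  classical
  unfold coverMatrix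
  simp only [Finset.card_filter, Nat.cast_sum]
  rw [Finset.sum_comm]
  have : ∀ (π : Equiv.Perm (Fin 4)) (k : Fin 4), π k = m ↔ k = π.symm m :=
    fun π k => π.eq_symm_apply.symm
  simp [this]

lemma Nv_diff :
    ((Nv 0 0 = 175 ∧ Nv 0 1 = 67 ∧ Nv 0 2 = 13 ∧ Nv 0 3 = 1) ∧
    (Nv 1 0 = 65 ∧ Nv 1 1 = 109 ∧ Nv 1 2 = 67 ∧ Nv 1 3 = 15)) ∧
    (Nv 2 0 = 15 ∧ Nv 2 1 = 67 ∧ Nv 2 2 = 109 ∧ Nv 2 3 = 65) ∧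
    (Nv 3 0 = 1 ∧ Nv 3 1 = 13 ∧ Nv 3 2 = 67 ∧ Nv 3 3 = 175) := by
  decide +kernel

lemma Nv_sum (i : Fin 3) : ∑ k, ((Nv i.castSucc k : ℝ) - Nv i.succ k) = 0 := by
  obtain ⟨⟨⟨a0, a1, a2, a3⟩, b0, b1, b2, b3⟩, ⟨c0, c1, c2, c3⟩, d0, d1, d2, d3⟩ := Nv_diff
  fin_cases i
  · change ∑ k, ((Nv 0 k : ℝ) - Nv 1 k) = 0
    simp only [Fin.sum_univ_four, a0, a1, a2, a3, b0, b1, b2, b3]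
    norm_num
  · change ∑ k, ((Nv 1 k : ℝ) - Nv 2 k) = 0
    simp only [Fin.sum_univ_four, c0, c1, c2, c3, b0, b1, b2, b3]
    norm_num
  · change ∑ k, ((Nv 2 k : ℝ) - Nv 3 k) = 0
    simp only [Fin.sum_univ_four, c0, c1, c2, c3, d0, d1, d2, d3]
    norm_num

lemma ker_const (v : Fin 4 → ℝ)
    (h : ∀ i : Fin 3, ∑ k, v k * ((Nv i.castSucc k : ℝ) - Nv i.succ k) = 0) (k : Fin 4) :
    v k = (∑ l, v l) / 4 := by
  obtain ⟨⟨⟨a0, a1, a2, a3⟩, b0, b1, b2, b3⟩, ⟨c0, c1, c2, c3⟩, d0, d1, d2, d3⟩ := Nv_diff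
  have h0 : ∑ k, v k * ((Nv 0 k : ℝ) - Nv 1 k) = 0 := h 0
  have h1 : ∑ k, v k * ((Nv 1 k : ℝ) - Nv 2 k) = 0 := h 1
  have h2 : ∑ k, v k * ((Nv 2 k : ℝ) - Nv 3 k) = 0 := h 2
  simp only [Fin.sum_univ_four, a0, a1, a2, a3, b0, b1, b2, b3, c0, c1, c2, c3,
    d0, d1, d2, d3] at h0 h1 h2 ⊢
  norm_num at h0 h1 h2
  have e1 : v 1 = v 0 := by linarith
  have e2 : v 2 = v 0 := by linarith
  have e3 : v 3 = v 0 := by linarith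
  fin_cases k <;> simp [e1, e2, e3] <;> ring

theorem statement_14 (S : Finset (Equiv.Perm (Fin 4)))
    (hC : ¬ ∃ c : ℕ, ∀ i j : Fin 4, coverMatrix S i j = c) :
    ∃ n : ℕ, 2 ≤ n ∧ ∃ i j : Fin (n - 1),
      deriv (fun t : ℝ => hSN n S (Pi.single (i, j) t)) 0 ≠ 0 := by
  by_contra hcon
  have hz : ∀ i j : Fin 3, ∑ k, ∑ m, (coverMatrix S m k : ℝ) *
      (((Nv i.castSucc k : ℝ) - Nv i.succ k) * ((Nv j.castSucc m : ℝ) - Nv j.succ m)) = 0 := by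
    intro i j
    have h0 : deriv (fun t : ℝ => hSN 4 S (Pi.single (i, j) t)) 0 = 0 := by
      by_contra hne
      exact hcon ⟨4, by norm_num, i, j, hne⟩
    rw [hSN_deriv] at h0
    simp only [Bmat_sum (fun p => gv p _) (fun q => gv q _)] at h0
    rw [cover_sum S (fun k m => (gv i.castSucc k - gv i.succ k) *
      (gv j.castSucc m - gv j.succ m))] at h0
    have h1 := (mul_eq_zero.1 h0).resolve_left (by norm_num)
    have h2 : ∑ k, ∑ m, (coverMatrix S m k : ℝ) *
      (((Nv i.castSucc k : ℝ) - Nv i.succ k) * ((Nv j.castSucc m : ℝ) - Nv j.succ m)) =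
      6144 ^ 2 * ∑ k, ∑ m, (coverMatrix S m k : ℝ) * ((gv i.castSucc k - gv i.succ k) *
        (gv j.castSucc m - gv j.succ m)) := by
      simp only [Finset.mul_sum, gv_val]
      refine Finset.sum_congr rfl fun k _ => Finset.sum_congr rfl fun m _ => ?_
      ring
    rw [h2, h1, mul_zero]
  have h1 : ∀ (j : Fin 3) (k : Fin 4),
      ∑ m, (coverMatrix S m k : ℝ) * ((Nv j.castSucc m : ℝ) - Nv j.succ m) = 0 := by
    intro j k
    have hk := ker_const
      (fun k => ∑ m, (coverMatrix S m k : ℝ) * ((Nv j.castSucc m : ℝ) - Nv j.succ m))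
      (fun i => by
        rw [← hz i j]
        refine Finset.sum_congr rfl fun k _ => ?_
        rw [Finset.sum_mul]
        refine Finset.sum_congr rfl fun m _ => ?_
        ring) k
    rw [hk, Finset.sum_comm]
    simp only [← Finset.sum_mul, cover_row, ← Finset.mul_sum, Nv_sum]
    simp
  have h2 : ∀ m k, (coverMatrix S m k : ℝ) = S.card / 4 := by
    intro m k
    rw [ker_const (fun m => (coverMatrix S m k : ℝ)) (fun j => h1 j k) m, cover_col]
  refine hC ⟨coverMatrix S 0 0, fun i j => ?_⟩
  have := (h2 i j).trans (h2 0 0).symm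
  exact_mod_cast this
end

section
/- Let S be a set of 4-permutations. If there exist permutons μ_1 and μ_2 such that Σ_{π∈S} d(π,μ_1) < |S|/24 and Σ_{π∈S} d(π,μ_2) > |S|/24, then there exists a permuton μ that is not the uniform permuton and satisfies Σ_{π∈S} d(π,μ) = |S|/24. -/
open MeasureTheory Filter

noncomputable section

/-- Convex combination of two measures. -/
def mixM (μ ν : Measure (ℝ × ℝ)) (t : ℝ) : Measure (ℝ × ℝ) :=
  ENNReal.ofReal (1 - t) • μ + ENNReal.ofReal t • ν

/-- The diagonal permuton. -/
def diagM : Measure (ℝ × ℝ) :=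
  Measure.map (fun x : ℝ => (x, x)) (volume.restrict (Set.Icc (0 : ℝ) 1))

lemma meas_diag : Measurable (fun x : ℝ => (x, x)) := by fun_prop

lemma isPermuton_diag : IsPermuton diagM := by
  refine ⟨?_, ?_, ?_⟩
  · have : IsProbabilityMeasure (volume.restrict (Set.Icc (0 : ℝ) 1)) := ⟨by simp⟩
    exact Measure.isProbabilityMeasure_map meas_diag.aemeasurable
  · intro x x' h0 h h1
    rw [diagM, Measure.map_apply meas_diag (measurableSet_Icc.prod measurableSet_Icc),
      Measure.restrict_apply (meas_diag (measurableSet_Icc.prod measurableSet_Icc))]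
    have : (fun x : ℝ => (x, x)) ⁻¹' (Set.Icc x x' ×ˢ Set.Icc (0 : ℝ) 1) ∩ Set.Icc 0 1
        = Set.Icc x x' := by
      ext y; simp only [Set.mem_inter_iff, Set.mem_preimage, Set.mem_prod, Set.mem_Icc]
      constructor
      · rintro ⟨⟨h, _⟩, _⟩; exact h
      · rintro ⟨a, b⟩; refine ⟨⟨⟨a, b⟩, ?_, ?_⟩, ?_, ?_⟩ <;> linarith
    rw [this, Real.volume_Icc]
  · intro x x' h0 h h1
    rw [diagM, Measure.map_apply meas_diag (measurableSet_Icc.prod measurableSet_Icc),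
      Measure.restrict_apply (meas_diag (measurableSet_Icc.prod measurableSet_Icc))]
    have : (fun x : ℝ => (x, x)) ⁻¹' (Set.Icc (0 : ℝ) 1 ×ˢ Set.Icc x x') ∩ Set.Icc 0 1
        = Set.Icc x x' := by
      ext y; simp only [Set.mem_inter_iff, Set.mem_preimage, Set.mem_prod, Set.mem_Icc]
      constructor
      · rintro ⟨⟨_, h⟩, _⟩; exact h
      · rintro ⟨a, b⟩; refine ⟨⟨⟨?_, ?_⟩, a, b⟩, ?_, ?_⟩ <;> linarith
    rw [this, Real.volume_Icc]

lemma mix_weight {t : ℝ} (h0 : 0 ≤ t) (h1 : t ≤ 1) :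
    ENNReal.ofReal (1 - t) + ENNReal.ofReal t = 1 := by
  rw [← ENNReal.ofReal_add (by linarith) h0]; simp

lemma isPermuton_mix {μ ν : Measure (ℝ × ℝ)} (hμ : IsPermuton μ) (hν : IsPermuton ν)
    {t : ℝ} (h0 : 0 ≤ t) (h1 : t ≤ 1) : IsPermuton (mixM μ ν t) := by
  obtain ⟨p, a, b⟩ := hμ
  obtain ⟨q, c, d⟩ := hν
  refine ⟨⟨?_⟩, ?_, ?_⟩
  · simp [mixM, mix_weight h0 h1]
  · intro x x' u v w
    simp only [mixM, Measure.add_apply, Measure.smul_apply, smul_eq_mul, a x x' u v w, c x x' u v w]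
    rw [← add_mul, mix_weight h0 h1, one_mul]
  · intro x x' u v w
    simp only [mixM, Measure.add_apply, Measure.smul_apply, smul_eq_mul, b x x' u v w, d x x' u v w]
    rw [← add_mul, mix_weight h0 h1, one_mul]

lemma measurableSet_diag' : MeasurableSet {p : ℝ × ℝ | p.1 = p.2} :=
  measurableSet_eq_fun measurable_fst measurable_snd

lemma diagM_diag : diagM {p : ℝ × ℝ | p.1 = p.2} = 1 := by
  rw [diagM, Measure.map_apply meas_diag measurableSet_diag']
  simp

lemma uniform_diag : uniformPermuton {p : ℝ × ℝ | p.1 = p.2} = 0 := by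
  have h : (volume : Measure (ℝ × ℝ)) {p : ℝ × ℝ | p.1 = p.2} = 0 := by
    rw [Measure.volume_eq_prod, Measure.prod_apply measurableSet_diag']
    have : ∀ x : ℝ, Prod.mk x ⁻¹' {p : ℝ × ℝ | p.1 = p.2} = {x} := by
      intro x; ext y; simp [eq_comm]
    simp [this]
  exact le_antisymm ((Measure.restrict_apply_le _ _).trans h.le) bot_le

lemma mix_ne_uniform (μ : Measure (ℝ × ℝ)) {t : ℝ} (h0 : 0 < t) :
    mixM μ diagM t ≠ uniformPermuton := by
  intro h
  have := congrArg (fun m => m {p : ℝ × ℝ | p.1 = p.2}) h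
  simp only [mixM, Measure.add_apply, Measure.smul_apply, smul_eq_mul, diagM_diag, uniform_diag,
    mul_one, add_eq_zero, ENNReal.ofReal_eq_zero] at this
  linarith [this.2]

lemma pi_mix (μ ν : Measure (ℝ × ℝ)) [IsProbabilityMeasure μ] [IsProbabilityMeasure ν]
    {k : ℕ} (t : ℝ) :
    (Measure.pi fun _ : Fin k => mixM μ ν t) = ∑ s : Fin k → Bool,
      (∏ i, (if s i then ENNReal.ofReal (1 - t) else ENNReal.ofReal t)) •
        Measure.pi (fun i => if s i then μ else ν) := by
  have hf : IsFiniteMeasure (mixM μ ν t) :=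
    ⟨by simp [mixM, ENNReal.add_lt_top]⟩
  have hf2 : ∀ (s : Fin k → Bool) i, IsProbabilityMeasure (if s i then μ else ν) := by
    intro s i; split_ifs <;> infer_instance
  refine Measure.pi_eq (fun A _ => ?_)
  simp only [Measure.finset_sum_apply, Measure.smul_apply, smul_eq_mul, Measure.pi_pi]
  have : ∀ i, mixM μ ν t (A i) = ∑ b : Bool,
      (if b then ENNReal.ofReal (1 - t) else ENNReal.ofReal t) * (if b then μ else ν) (A i) := by
    intro i; simp [mixM]
  simp_rw [this, ← Finset.prod_mul_distrib]
  rw [Finset.prod_univ_sum, Fintype.piFinset_univ]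

lemma continuous_density (μ ν : Measure (ℝ × ℝ)) [IsProbabilityMeasure μ]
    [IsProbabilityMeasure ν] {k : ℕ} (π : Equiv.Perm (Fin k)) :
    Continuous fun t => PermutonDensity π (mixM μ ν t) := by
  have hf2 : ∀ (s : Fin k → Bool) i, IsProbabilityMeasure (if s i then μ else ν) := by
    intro s i; split_ifs <;> infer_instance
  unfold PermutonDensity
  simp_rw [pi_mix, Measure.finset_sum_apply, Measure.smul_apply, smul_eq_mul]
  have hfin : ∀ (s : Fin k → Bool) (t : ℝ),
      (∏ i, (if s i then ENNReal.ofReal (1 - t) else ENNReal.ofReal t)) ≠ ⊤ := by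
    intro s t
    refine ENNReal.prod_ne_top (fun i _ => ?_)
    split_ifs <;> exact ENNReal.ofReal_ne_top
  have := fun (t : ℝ) (A : Set (Fin k → ℝ × ℝ)) => ENNReal.toReal_sum (s := Finset.univ)
    (f := fun s : Fin k → Bool =>
      (∏ i, (if s i then ENNReal.ofReal (1 - t) else ENNReal.ofReal t)) *
        Measure.pi (fun i => if s i then μ else ν) A)
    (fun s _ => ENNReal.mul_ne_top (hfin s t) (measure_ne_top _ _))
  simp_rw [this, ENNReal.toReal_mul, ENNReal.toReal_prod]
  refine continuous_finset_sum _ (fun s _ => Continuous.mul ?_ continuous_const)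
  refine continuous_finset_prod _ (fun i _ => ?_)
  split_ifs
  · simp only [ENNReal.toReal_ofReal']; fun_prop
  · simp only [ENNReal.toReal_ofReal']; fun_prop

lemma mix_zero (μ ν : Measure (ℝ × ℝ)) : mixM μ ν 0 = μ := by simp [mixM]
lemma mix_one (μ ν : Measure (ℝ × ℝ)) : mixM μ ν 1 = ν := by simp [mixM]

lemma main_aux (S : Finset (Equiv.Perm (Fin 4))) (μ : Measure (ℝ × ℝ)) (h : IsPermuton μ)
    (c : ℝ) (hne : ∑ π ∈ S, PermutonDensity π μ ≠ c)
    (hc : c ∈ Set.uIcc (∑ π ∈ S, PermutonDensity π μ) (∑ π ∈ S, PermutonDensity π diagM)) :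
    ∃ μ : Measure (ℝ × ℝ), IsPermuton μ ∧ μ ≠ uniformPermuton ∧
      ∑ π ∈ S, PermutonDensity π μ = c := by
  have := h.1
  have := isPermuton_diag.1
  have hcont : Continuous fun t => ∑ π ∈ S, PermutonDensity π (mixM μ diagM t) :=
    continuous_finset_sum _ (fun π _ => continuous_density μ diagM π)
  have hiv := intermediate_value_uIcc (a := (0 : ℝ)) (b := 1) hcont.continuousOn
  simp only [mix_zero, mix_one] at hiv
  obtain ⟨t, ht, hft⟩ := hiv hc
  rw [Set.uIcc_of_le zero_le_one] at ht
  have ht0 : t ≠ 0 := by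
    rintro rfl
    simp only [mix_zero] at hft
    exact hne hft
  exact ⟨_, isPermuton_mix h isPermuton_diag ht.1 ht.2,
    mix_ne_uniform μ (lt_of_le_of_ne ht.1 (Ne.symm ht0)), hft⟩

end

theorem statement_17 (S : Finset (Equiv.Perm (Fin 4)))
    (μ₁ μ₂ : Measure (ℝ × ℝ)) (h₁ : IsPermuton μ₁) (h₂ : IsPermuton μ₂)
    (hlt : ∑ π ∈ S, PermutonDensity π μ₁ < (S.card : ℝ) / 24)
    (hgt : (S.card : ℝ) / 24 < ∑ π ∈ S, PermutonDensity π μ₂) :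
    ∃ μ : Measure (ℝ × ℝ), IsPermuton μ ∧ μ ≠ uniformPermuton ∧
      ∑ π ∈ S, PermutonDensity π μ = (S.card : ℝ) / 24 := by
  rcases le_total ((S.card : ℝ) / 24) (∑ π ∈ S, PermutonDensity π diagM) with h | h
  · exact main_aux S μ₁ h₁ _ hlt.ne (Set.mem_uIcc.2 (Or.inl ⟨hlt.le, h⟩))
  · exact main_aux S μ₂ h₂ _ hgt.ne' (Set.mem_uIcc.2 (Or.inr ⟨h, hgt.le⟩))
end
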